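/- arXiv:2202.13407 — 5 statements merged into one kernel-verified Lean document; each statement's English description precedes it below -/
import Mathlib

section
/- Let 0 < c < 1 and a, b > 0 with a·c ≤ 1 and b·(1−c) ≤ 1, and define T : [0,1] → [0,1] by T x = a x for 0 ≤ x < c and T x = b x + 1 − b for c ≤ x ≤ 1. If a·c < 1 or b·(1−c) < 1 (equivalently, if it is not the case that a c = b(1−c) = 1), then there is no function φ : ℤ → [0,∞) with Σ_{k∈ℤ} φ(k) < ∞ such that T ∈ G(φ). -/
/-!
The fixed points `0` and `1` cannot be glued to each other in one of the two possible orders.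

If `b ≤ 1`, the distance to `1` does not increase along orbits in `[c, 1]`, so a trajectory that
tends to `1` in the past must equal `1` from some time on, and cannot follow `0` in the future.

If `b > 1`, the fixed point `1` is repelling, so a trajectory that tends to `1` in the future must
hit `1` exactly. Since `a c ≤ 1`, the left branch never takes the value `1`, hence `1` is its only
preimage and the trajectory was equal to `1` at all earlier times: it cannot follow `0` in the
past.

Summability of `φ` enters through `φ k → 0` as `k → ±∞`.
-/

/-- Consider the piecewise linear map `T x = a x` on `[0, c)`,
`T x = b x + 1 - b` on `[c, 1]`, with `0 < c < 1`, `a, b > 0`, `a c ≤ 1`, `b (1 - c) ≤ 1`.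
If `a c < 1` or `b (1 - c) < 1`, then there is no nonnegative summable `φ : ℤ → [0, ∞)`
for which `T` satisfies the gluing property `G(φ)` (over trajectories in `[0, 1]`). -/
theorem piecewise_linear_no_gluing (c a b : ℝ) (hc0 : 0 < c) (hc1 : c < 1)
    (ha : 0 < a) (hb : 0 < b) (hac : a * c ≤ 1) (hbc : b * (1 - c) ≤ 1)
    (hne : a * c < 1 ∨ b * (1 - c) < 1)
    (T : ℝ → ℝ) (hT : ∀ x : ℝ, T x = if x < c then a * x else b * x + 1 - b) :
    ¬ ∃ φ : ℤ → ℝ, (∀ k, 0 ≤ φ k) ∧ Summable φ ∧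
      ∀ x y : ℤ → ℝ,
        (∀ i, x i ∈ Set.Icc (0 : ℝ) 1) → (∀ i : ℤ, T (x i) = x (i + 1)) →
        (∀ i, y i ∈ Set.Icc (0 : ℝ) 1) → (∀ i : ℤ, T (y i) = y (i + 1)) →
        ∃ z : ℤ → ℝ, (∀ i, z i ∈ Set.Icc (0 : ℝ) 1) ∧ (∀ i : ℤ, T (z i) = z (i + 1)) ∧
          (∀ k : ℤ, k < 0 → |x k - z k| ≤ φ k * |x 0 - y 0|) ∧
          (∀ k : ℤ, 0 ≤ k → |y k - z k| ≤ φ k * |x 0 - y 0|) := by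
  rintro ⟨φ, -, hsum, hglue⟩
  have hlim : Filter.Tendsto φ Filter.cofinite (nhds 0) := hsum.tendsto_cofinite_zero
  rw [Int.cofinite_eq, Filter.tendsto_sup] at hlim
  obtain ⟨hbot, htop⟩ := hlim
  have small_bot : ∀ ε : ℝ, 0 < ε → ∃ M : ℤ, ∀ k ≤ M, φ k < ε := fun ε hε =>
    Filter.eventually_atBot.1 (hbot.eventually_lt_const hε)
  have small_top : ∀ ε : ℝ, 0 < ε → ∃ M : ℤ, ∀ k ≥ M, φ k < ε := fun ε hε =>
    Filter.eventually_atTop.1 (htop.eventually_lt_const hε)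
  have T0 : T 0 = 0 := by rw [hT, if_pos hc0]; ring
  have T1 : T 1 = 1 := by rw [hT, if_neg (not_lt.2 hc1.le)]; ring
  have mem0 : (0 : ℝ) ∈ Set.Icc (0 : ℝ) 1 := by simp
  have mem1 : (1 : ℝ) ∈ Set.Icc (0 : ℝ) 1 := by simp
  have right_branch : ∀ u, c ≤ u → 1 - T u = b * (1 - u) := fun u hu => by
    rw [hT, if_neg (not_lt.2 hu)]; ring
  rcases le_or_gt b 1 with hb1 | hb1
  · obtain ⟨z, hz, hTz, hpast, hfut⟩ := hglue (fun _ => 1) (fun _ => 0)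
      (fun _ => mem1) (fun _ => T1) (fun _ => mem0) (fun _ => T0)
    norm_num at hpast hfut
    obtain ⟨M', hM'⟩ := small_bot (1 - c) (by linarith)
    obtain ⟨M, hMM', hM0⟩ : ∃ M : ℤ, M ≤ M' ∧ M < 0 :=
      ⟨min M' (-1), min_le_left _ _, by omega⟩
    have hdist : ∀ n : ℕ, 1 - z M ≤ 1 - z (M - n) := by
      intro n
      induction n with
      | zero => simp
      | succ n ih =>
        have hk := (abs_le.1 (hpast (M - (n + 1 : ℕ)) (by omega))).2
        have hs := hM' (M - (n + 1 : ℕ)) (by omega)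
        have hr := right_branch (z (M - (n + 1 : ℕ))) (by linarith)
        rw [hTz, show M - ((n + 1 : ℕ) : ℤ) + 1 = M - n by push_cast; ring] at hr
        nlinarith [(hz (M - (n + 1 : ℕ))).2]
    have hzM : z M = 1 := by
      refine le_antisymm (hz M).2 (le_of_forall_pos_lt_add fun ε hε => ?_)
      obtain ⟨K, hK⟩ := small_bot ε hε
      have h1 := hdist (M - K).toNat
      have h2 := hK (M - (M - K).toNat) (by omega)
      have h3 := (abs_le.1 (hpast (M - (M - K).toNat) (by omega))).2
      linarith
    have hfwd : ∀ n : ℕ, z (M + n) = 1 := by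
      intro n
      induction n with
      | zero => simpa using hzM
      | succ n ih =>
        rw [show M + ((n + 1 : ℕ) : ℤ) = M + n + 1 by push_cast; ring, ← hTz, ih, T1]
    obtain ⟨K, hK⟩ := small_top 1 one_pos
    have h1 := hfwd (max K 0 - M).toNat
    have h2 := hK (M + (max K 0 - M).toNat) (by omega)
    have h3 := hfut (M + (max K 0 - M).toNat) (by omega)
    rw [h1, abs_one] at h3
    linarith
  · obtain ⟨z, hz, hTz, hpast, hfut⟩ := hglue (fun _ => 0) (fun _ => 1)
      (fun _ => mem0) (fun _ => T0) (fun _ => mem1) (fun _ => T1)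
    norm_num at hpast hfut
    obtain ⟨M', hM'⟩ := small_top (1 - c) (by linarith)
    obtain ⟨M, hMM', hM0⟩ : ∃ M : ℤ, M' ≤ M ∧ 0 ≤ M :=
      ⟨max M' 0, le_max_left _ _, le_max_right _ _⟩
    have hdist : ∀ n : ℕ, 1 - z M ≤ 1 - z (M + n) := by
      intro n
      induction n with
      | zero => simp
      | succ n ih =>
        have hk := (abs_le.1 (hfut (M + n) (by omega))).2
        have hs := hM' (M + n) (by omega)
        have hr := right_branch (z (M + n)) (by linarith)
        rw [hTz, show M + (n : ℤ) + 1 = M + (n + 1 : ℕ) by push_cast; ring] at hr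
        nlinarith [(hz (M + n)).2]
    have hzM : z M = 1 := by
      refine le_antisymm (hz M).2 (le_of_forall_pos_lt_add fun ε hε => ?_)
      obtain ⟨K, hK⟩ := small_top ε hε
      have h1 := hdist (K - M).toNat
      have h2 := hK (M + (K - M).toNat) (by omega)
      have h3 := (abs_le.1 (hfut (M + (K - M).toNat) (by omega))).2
      linarith
    -- The left branch only takes values `< a c ≤ 1`, so `1` is the only preimage of `1`.
    have preimage_one : ∀ u, T u = 1 → u = 1 := by
      intro u hu
      rcases lt_or_ge u c with h | h
      · rw [hT, if_pos h] at hu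
        nlinarith
      · have hr := right_branch u h
        rw [hu, sub_self] at hr
        rcases mul_eq_zero.1 hr.symm with h' | h' <;> linarith
    have hbwd : ∀ n : ℕ, z (M - n) = 1 := by
      intro n
      induction n with
      | zero => simpa using hzM
      | succ n ih =>
        apply preimage_one
        rw [hTz, show M - ((n + 1 : ℕ) : ℤ) + 1 = M - n by push_cast; ring, ih]
    obtain ⟨K, hK⟩ := small_bot 1 one_pos
    have h1 := hbwd (M - min K (-1)).toNat
    have h2 := hK (M - (M - min K (-1)).toNat) (by omega)
    have h3 := hpast (M - (M - min K (-1)).toNat) (by omega)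
    rw [h1, abs_one] at h3
    linarith
end

section
/- Let R > 0 and α > 0, and define τ : [0,∞) → [0,∞) by τ(v) = v + R·v^{1+α}; τ is a strictly increasing bijection of [0,∞) onto itself, so for each n ∈ ℕ and v ≥ 0 the n-th backward iterate τ^{−n}(v) (the unique u ≥ 0 with τ^n(u) = v) is well defined. Then there exists K < ∞ such that τ^{−n}(v) ≤ K·n^{−1/α} for all v ∈ [0,1] and all integers n ≥ 1. -/
/-!
In the coordinate `y = u ^ α` the map `τ` satisfies `τ(u) ^ α ≥ y (1 + b y)` for `u ≤ 1`, with
`b = α R / (1 + R)` (`rpow_step`). Hence `1 / y` drops by at least `c = b / (1 + b)` at every step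
that starts in `[0, 1]`, so an orbit that is still in `[0, 1]` after `n` steps started at some `u`
with `n c u ^ α ≤ 1` (`orbit_bound`). Solving for `u` gives the theorem with `K = c ^ (-1/α)`.
-/

/-- One step of `τ` in the coordinate `u ^ α`; this is
`(1 + x) ^ α ≥ 1 + α log (1 + x) ≥ 1 + α x / (1 + x)` at `x = R u ^ α ≤ R`. -/
lemma rpow_step (R α u : ℝ) (hR : 0 < R) (hα : 0 < α) (hu : 0 ≤ u) (hu1 : u ≤ 1) :
    u ^ α * (1 + α * R / (1 + R) * u ^ α) ≤ (u + R * u ^ (1 + α)) ^ α := by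
  have hy0 : 0 ≤ u ^ α := Real.rpow_nonneg hu α
  have hy1 : u ^ α ≤ 1 := Real.rpow_le_one hu hu1 hα.le
  have hfac : u + R * u ^ (1 + α) = u * (1 + R * u ^ α) := by
    rw [Real.rpow_add_of_nonneg hu zero_le_one hα.le, Real.rpow_one]
    ring
  rw [hfac]
  set y := u ^ α with hy
  have hRy : R * y ≤ R := mul_le_of_le_one_right hR.le hy1
  have hz : 0 < 1 + R * y := by positivity
  rw [Real.mul_rpow hu hz.le, ← hy]
  refine mul_le_mul_of_nonneg_left ?_ hy0
  have hlog : R * y / (1 + R) ≤ Real.log (1 + R * y) := calc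
    R * y / (1 + R) ≤ R * y / (1 + R * y) := by gcongr
    _ = 1 - (1 + R * y)⁻¹ := by field_simp; ring
    _ ≤ _ := Real.one_sub_inv_le_log_of_pos hz
  calc 1 + α * R / (1 + R) * y = α * (R * y / (1 + R)) + 1 := by ring
    _ ≤ α * Real.log (1 + R * y) + 1 := by gcongr
    _ ≤ Real.exp (α * Real.log (1 + R * y)) := Real.add_one_le_exp _
    _ = (1 + R * y) ^ α := by rw [Real.rpow_def_of_pos hz, mul_comm]

lemma orbit_bound (R α : ℝ) (hR : 0 < R) (hα : 0 < α) (b : ℝ) (hb : b = α * R / (1 + R)) (n : ℕ) :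
    ∀ u : ℝ, 0 ≤ u → (fun w : ℝ => w + R * w ^ (1 + α))^[n] u ≤ 1 →
      u ≤ 1 ∧ n * (b / (1 + b)) * u ^ α ≤ 1 := by
  have hb0 : 0 < b := by rw [hb]; positivity
  induction n with
  | zero => intro u _ h; simpa using h
  | succ n ih =>
    intro u hu h
    rw [Function.iterate_succ_apply] at h
    have hinc : 0 ≤ R * u ^ (1 + α) := by positivity
    obtain ⟨h1, h2⟩ := ih _ (by positivity) h
    have hu1 : u ≤ 1 := by linarith
    refine ⟨hu1, ?_⟩
    have hstep := rpow_step R α u hR hα hu hu1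
    rw [← hb] at hstep
    have hy0 : 0 ≤ u ^ α := Real.rpow_nonneg hu α
    have hy1 : u ^ α ≤ 1 := Real.rpow_le_one hu hu1 hα.le
    set y := u ^ α
    have hprev : n * (b / (1 + b)) * (y * (1 + b * y)) ≤ 1 :=
      (mul_le_mul_of_nonneg_left hstep (by positivity)).trans h2
    have hsplit : n * (b / (1 + b)) * y ≤ 1 / (1 + b * y) := by
      rw [le_div_iff₀ (by positivity)]
      linarith
    have hdrop : b / (1 + b) * y ≤ 1 - 1 / (1 + b * y) := calc
      b / (1 + b) * y = b * y / (1 + b) := by ring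
      _ ≤ b * y / (1 + b * y) := by
        gcongr
        exact mul_le_of_le_one_right hb0.le hy1
      _ = _ := by field_simp; ring
    push_cast
    linarith

/-- For `τ(v) = v + R v^{1+α}` (`R > 0`, `α > 0`), there is `K < ∞` with
`τ^{-n}(v) ≤ K n^{-1/α}` for all `v ∈ [0, 1]` and all `n ≥ 1`, where `τ^{-n}(v)` is the
unique `u ≥ 0` with `τ^n(u) = v`. -/
theorem neutral_inverse_upper_bound (R α : ℝ) (hR : 0 < R) (hα : 0 < α) :
    ∃ K : ℝ, ∀ n : ℕ, 1 ≤ n → ∀ v ∈ Set.Icc (0 : ℝ) 1, ∀ u : ℝ, 0 ≤ u →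
      (fun w : ℝ => w + R * w ^ (1 + α))^[n] u = v →
      u ≤ K * (n : ℝ) ^ (-(1 / α)) := by
  obtain ⟨b, hb⟩ : ∃ b, b = α * R / (1 + R) := ⟨_, rfl⟩
  have hb0 : 0 < b := by rw [hb]; positivity
  refine ⟨(b / (1 + b)) ^ (-(1 / α)), fun n hn v hv u hu huv => ?_⟩
  obtain ⟨-, h⟩ := orbit_bound R α hR hα b hb n u hu (huv.trans_le hv.2)
  have hn0 : (0 : ℝ) < n := by exact_mod_cast hn
  have hc : 0 < b / (1 + b) := by positivity
  set c := b / (1 + b)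
  have hle : u ^ α ≤ (c * n)⁻¹ := by
    rw [← one_div, le_div_iff₀ (by positivity)]
    linarith
  calc u = (u ^ α) ^ (1 / α) := by rw [one_div, Real.rpow_rpow_inv hu hα.ne']
    _ ≤ ((c * n)⁻¹) ^ (1 / α) := by gcongr
    _ = c ^ (-(1 / α)) * (n : ℝ) ^ (-(1 / α)) := by
      rw [Real.inv_rpow (by positivity), ← Real.rpow_neg (by positivity),
        Real.mul_rpow hc.le hn0.le]
end

section
/- Let R > 0 and α > 0, and define τ : [0,∞) → [0,∞) by τ(v) = v + R·v^{1+α}. Then there exists K > 0 such that τ^{−n}(v) ≥ K·v·n^{−1/α} for all v ∈ [0,1] and all integers n ≥ 1, where τ^{−n}(v) is the unique u ≥ 0 with τ^n(u) = v. -/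
/-! The coordinate `w ↦ w ^ (-α)` turns the neutral map `τ` into almost a translation: since
`τ w = w (1 + R w ^ α)`, the Bernoulli inequality `(1 + x) ^ (-α) ≥ 1 - α x` gives
`w ^ (-α) ≤ (τ w) ^ (-α) + α R`. Iterating `n` times, `u ^ (-α) ≤ v ^ (-α) + n α R` whenever
`τ^n u = v`, and for `0 < v ≤ 1`, `n ≥ 1` the right side is at most `v ^ (-α) n (1 + α R)`.
Raising to the power `-1/α` yields the bound with `K = (1 + α R) ^ (-1/α)`. -/

/-- The Bernoulli inequality for the negative exponent `-α`. -/
lemma one_sub_mul_le_rpow_neg {α x : ℝ} (hα : 0 < α) (hx : 0 ≤ x) :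
    1 - α * x ≤ (1 + x) ^ (-α) := by
  have hpos : 0 < 1 + x := by linarith
  rw [Real.rpow_def_of_pos hpos]
  have hexp := Real.add_one_le_exp (Real.log (1 + x) * -α)
  have hlog := Real.log_le_sub_one_of_pos hpos
  nlinarith

/-- One step of `τ` decreases `w ^ (-α)` by at most `α R`. -/
lemma rpow_neg_le_step {R α w : ℝ} (hR : 0 < R) (hα : 0 < α) (hw : 0 < w) :
    w ^ (-α) ≤ (w + R * w ^ (1 + α)) ^ (-α) + α * R := by
  have hpow : 0 < w ^ α := Real.rpow_pos_of_pos hw α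
  have hfactor : w + R * w ^ (1 + α) = w * (1 + R * w ^ α) := by
    rw [Real.rpow_add hw, Real.rpow_one]; ring
  have hcancel : w ^ (-α) * w ^ α = 1 := by
    rw [← Real.rpow_add hw]; simp
  have hbern := mul_le_mul_of_nonneg_left
    (one_sub_mul_le_rpow_neg hα (x := R * w ^ α) (by positivity))
    (Real.rpow_pos_of_pos hw (-α)).le
  rw [hfactor, Real.mul_rpow hw.le (by positivity)]
  linear_combination hbern + α * R * hcancel

lemma iterate_pos_and_rpow_neg_le {R α : ℝ} (hR : 0 < R) (hα : 0 < α) {u : ℝ} (hu : 0 < u)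
    (n : ℕ) :
    0 < (fun w : ℝ => w + R * w ^ (1 + α))^[n] u ∧
      u ^ (-α) ≤ ((fun w : ℝ => w + R * w ^ (1 + α))^[n] u) ^ (-α) + n * (α * R) := by
  induction n with
  | zero => simpa using hu
  | succ n ih =>
    obtain ⟨hpos, hle⟩ := ih
    rw [Function.iterate_succ_apply']
    refine ⟨by positivity, ?_⟩
    have hstep := rpow_neg_le_step hR hα hpos
    push_cast
    linarith

/-- For `τ(v) = v + R v^{1+α}` (`R > 0`, `α > 0`), there is `K > 0` with
`τ^{-n}(v) ≥ K v n^{-1/α}` for all `v ∈ [0, 1]` and all `n ≥ 1`, where `τ^{-n}(v)` is the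
unique `u ≥ 0` with `τ^n(u) = v`. -/
theorem neutral_inverse_lower_bound (R α : ℝ) (hR : 0 < R) (hα : 0 < α) :
    ∃ K : ℝ, 0 < K ∧ ∀ n : ℕ, 1 ≤ n → ∀ v ∈ Set.Icc (0 : ℝ) 1, ∀ u : ℝ, 0 ≤ u →
      (fun w : ℝ => w + R * w ^ (1 + α))^[n] u = v →
      K * v * (n : ℝ) ^ (-(1 / α)) ≤ u := by
  refine ⟨(1 + α * R) ^ (-(1 / α)), by positivity, ?_⟩
  rintro n hn v ⟨-, hv1⟩ u hu huv
  rcases hu.eq_or_lt with rfl | hu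
  · -- `0` is a fixed point of `τ`, so `v = 0`.
    have hfix : (fun w : ℝ => w + R * w ^ (1 + α)) 0 = 0 := by
      simp [Real.zero_rpow (by positivity : 1 + α ≠ 0)]
    rw [Function.iterate_fixed hfix] at huv
    simp [← huv]
  obtain ⟨hv, hle⟩ := iterate_pos_and_rpow_neg_le hR hα hu n
  rw [huv] at hv hle
  have hn' : (1 : ℝ) ≤ n := by exact_mod_cast hn
  have hvα : 1 ≤ v ^ (-α) := Real.one_le_rpow_of_pos_of_le_one_of_nonpos hv hv1 (by linarith)
  have hbound : u ^ (-α) ≤ (1 + α * R) * v ^ (-α) * n := by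
    have hfst : v ^ (-α) ≤ v ^ (-α) * n := le_mul_of_one_le_right (by linarith) hn'
    have hsnd : n * (α * R) ≤ v ^ (-α) * (n * (α * R)) :=
      le_mul_of_one_le_left (by positivity) hvα
    linarith
  have hinv : ∀ x : ℝ, 0 < x → (x ^ (-α)) ^ (-(1 / α)) = x := by
    intro x hx
    rw [← Real.rpow_mul hx.le, show -α * -(1 / α) = 1 by field_simp, Real.rpow_one]
  have hfinal := Real.rpow_le_rpow_of_nonpos (Real.rpow_pos_of_pos hu (-α)) hbound
    (show -(1 / α) ≤ 0 by rw [neg_nonpos]; positivity)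
  rwa [Real.mul_rpow (by positivity) (by positivity), Real.mul_rpow (by positivity) (by positivity),
    hinv v hv, hinv u hu] at hfinal
end

section
/- Let R > 0 and α > 0, and define τ : [0,∞) → [0,∞) by τ(v) = v + R·v^{1+α}. Then for every v > 0 the inverse satisfies the two-sided estimate v/(1 + R·v^α) ≤ τ^{−1}(v) ≤ v·(1 − R·v^α/(1 + (1+α)·R·v^α)). -/
/-!
The lower bound follows from `u ≤ v`, since `v = u (1 + R u^α) ≤ u (1 + R v^α)`.
The upper bound is convexity of `τ`: its graph lies above the tangent at `v`, so
`v = τ(u) ≥ τ(v) + τ'(v) (u - v)`. After scaling by `v` this is Bernoulli's inequality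
`(u/v)^(1+α) ≥ 1 + (1+α) (u/v - 1)`.
-/

/-- For `τ(v) = v + R v^{1+α}` (`R > 0`, `α > 0`) and every `v > 0`, the
inverse `τ^{-1}(v)` (the unique `u ≥ 0` with `τ(u) = v`) satisfies
`v / (1 + R v^α) ≤ τ^{-1}(v) ≤ v (1 - R v^α / (1 + (1+α) R v^α))`. -/
theorem neutral_inverse_two_sided_bound (R α : ℝ) (hR : 0 < R) (hα : 0 < α)
    (v u : ℝ) (hv : 0 < v) (hu : 0 ≤ u)
    (huv : u + R * u ^ (1 + α) = v) :
    v / (1 + R * v ^ α) ≤ u ∧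
      u ≤ v * (1 - R * v ^ α / (1 + (1 + α) * R * v ^ α)) := by
  have hx : 0 < v ^ α := Real.rpow_pos_of_pos hv α
  have hRx : 0 < R * v ^ α := mul_pos hR hx
  have huv_le : u ≤ v := by
    have : 0 ≤ R * u ^ (1 + α) := by positivity
    linarith
  constructor
  · rw [div_le_iff₀ (by positivity)]
    have hpow : u ^ (1 + α) = u * u ^ α := by
      rw [Real.rpow_add_of_nonneg hu zero_le_one hα.le, Real.rpow_one]
    have hmono : u ^ α ≤ v ^ α := Real.rpow_le_rpow hu huv_le hα.le
    have : R * (u * u ^ α) ≤ R * (u * v ^ α) := by gcongr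
    rw [hpow] at huv
    linarith
  · have hD : 0 < 1 + (1 + α) * R * v ^ α := by positivity
    have hbern : 1 + (1 + α) * (u / v - 1) ≤ (u / v) ^ (1 + α) := by
      have hs : -1 ≤ u / v - 1 := by
        have : 0 ≤ u / v := by positivity
        linarith
      simpa using one_add_mul_self_le_rpow_one_add hs (show 1 ≤ 1 + α by linarith)
    have htangent : v ^ α * (v + (1 + α) * (u - v)) ≤ u ^ (1 + α) := by
      rw [Real.div_rpow hu hv.le, le_div_iff₀ (by positivity), Real.rpow_add hv,
        Real.rpow_one] at hbern
      calc v ^ α * (v + (1 + α) * (u - v))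
          = (1 + (1 + α) * (u / v - 1)) * (v * v ^ α) := by field_simp
        _ ≤ u ^ (1 + α) := hbern
    have hmul := mul_le_mul_of_nonneg_left htangent hR.le
    have hform : v * (1 - R * v ^ α / (1 + (1 + α) * R * v ^ α))
        = v * (1 + α * (R * v ^ α)) / (1 + (1 + α) * R * v ^ α) := by
      field_simp
      ring
    rw [hform, le_div_iff₀ hD]
    linarith
end

section
/- Let α > 1 and define T : [0,1] → [0,1] by T x = x + (1/2)·(2x)^{1+α} for 0 ≤ x ≤ 1/2 and T x = 1 − T(1 − x) for 1/2 < x ≤ 1. Then there is no function φ : ℤ → [0,∞) with Σ_{k∈ℤ} φ(k) < ∞ such that T ∈ G(φ), i.e. T does not satisfy the (strong) gluing property with any summable rate function. -/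
/-!
The idea is to glue the backward left-branch orbit of `1` to the neutral fixed point `0`.
Take `y = 0` and let `x` be the trajectory with `x i = 1` for `i ≥ 0` whose past is obtained by
always choosing the preimage in `[0, 1/2]`. Since `0` is repelling and is its own only preimage,
a gluing trajectory `z` that tends to `0` must vanish identically
(`eq_zero_of_tendsto_zero`). The gluing property then forces `x (-k) ≤ φ (-k)` for `k ≥ 1`.
As `α > 1`, the backward orbit satisfies `x (-k) ≥ 1 / (2 k + 1)` (`backward_orbit_lower_bound`),
so `φ` dominates a harmonic series and is not summable.
-/

open Filter Topology

/-- The left branch maps `[0, 1/2]` onto `[0, 1]`. -/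
lemma exists_left_preimage {α : ℝ} (hα : 1 < α) {v : ℝ} (hv : v ∈ Set.Icc (0 : ℝ) 1) :
    ∃ u ∈ Set.Icc (0 : ℝ) (1 / 2), u + (1 / 2) * (2 * u) ^ (1 + α) = v := by
  have hc : ContinuousOn (fun u : ℝ => u + (1 / 2) * (2 * u) ^ (1 + α))
      (Set.Icc (0 : ℝ) (1 / 2)) := by
    refine Continuous.continuousOn ?_
    have : Continuous fun u : ℝ => (2 * u) ^ (1 + α) :=
      (continuous_const.mul continuous_id).rpow_const fun _ => Or.inr (by linarith)
    fun_prop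
  have h := intermediate_value_Icc (by norm_num : (0 : ℝ) ≤ 1 / 2) hc
  have h0 : (0 : ℝ) ^ (1 + α) = 0 := Real.zero_rpow (by linarith)
  have h1 : (2 : ℝ) * (1 / 2) = 1 := by norm_num
  simp only [mul_zero, h0, h1, Real.one_rpow, add_zero] at h
  exact h (by norm_num; exact hv)

/-- The inverse left branch contracts at most harmonically: since `1 + α ≥ 2`, one has
`a n ≤ a (n + 1) + 2 * a (n + 1) ^ 2`. -/
lemma backward_orbit_lower_bound {α : ℝ} (hα : 1 < α) (a : ℕ → ℝ) (ha0 : a 0 = 1)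
    (ha : ∀ n, a (n + 1) ∈ Set.Icc (0 : ℝ) (1 / 2))
    (hstep : ∀ n, a (n + 1) + (1 / 2) * (2 * a (n + 1)) ^ (1 + α) = a n) (n : ℕ) :
    1 / (2 * (n : ℝ) + 1) ≤ a n := by
  induction n with
  | zero => simp [ha0]
  | succ n ih =>
    obtain ⟨h0, h1⟩ := ha n
    have hs := hstep n
    have hp : (2 * a (n + 1)) ^ (1 + α) ≤ (2 * a (n + 1)) ^ 2 := by
      rw [← Real.rpow_natCast]
      exact Real.rpow_le_rpow_of_exponent_ge_of_imp (by linarith) (by linarith)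
        (by push_cast; linarith) (fun _ h => by linarith)
    by_contra! hlt
    push_cast at hlt
    have hn : (0 : ℝ) ≤ n := n.cast_nonneg
    set b := a (n + 1)
    set t : ℝ := 1 / (2 * ((n : ℝ) + 1) + 1) with ht
    have h3 : a n < t + 2 * t ^ 2 := by nlinarith
    have h4 : t + 2 * t ^ 2 ≤ 1 / (2 * (n : ℝ) + 1) := by
      have : t + 2 * t ^ 2 = (2 * n + 5) / (2 * n + 3) ^ 2 := by
        rw [ht]
        have : (2 * ((n : ℝ) + 1) + 1) = 2 * n + 3 := by ring
        rw [this]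
        field_simp
        ring
      rw [this, div_le_div_iff₀ (by positivity) (by positivity)]
      nlinarith
    linarith

/-- Every point of `(0, 1]` has positive image, and points of `[0, 1/2]` do not move left;
so a trajectory that is positive somewhere stays bounded away from `0` in the future. -/
lemma eq_zero_of_tendsto_zero {α : ℝ} (hα : 1 < α) {T : ℝ → ℝ}
    (hT : ∀ x ∈ Set.Icc (0 : ℝ) 1, T x =
      if x ≤ 1 / 2 then x + (1 / 2) * (2 * x) ^ (1 + α)
      else 1 - ((1 - x) + (1 / 2) * (2 * (1 - x)) ^ (1 + α)))
    {z : ℤ → ℝ} (hz : ∀ i, z i ∈ Set.Icc (0 : ℝ) 1) (hzT : ∀ i : ℤ, T (z i) = z (i + 1))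
    (hlim : Tendsto z atTop (𝓝 0)) (i : ℤ) : z i = 0 := by
  by_contra hne
  have hpos : 0 < z i := lt_of_le_of_ne (hz i).1 (Ne.symm hne)
  have hall : ∀ j, i ≤ j → 0 < z j := by
    intro j hj
    induction j, hj using Int.le_induction with
    | base => exact hpos
    | succ j hj ih =>
      rw [← hzT j, hT _ (hz j)]
      split_ifs with h
      · have : 0 ≤ (2 * z j) ^ (1 + α) := Real.rpow_nonneg (by linarith) _
        linarith
      · push Not at h
        have : (2 * (1 - z j)) ^ (1 + α) ≤ 1 :=
          Real.rpow_le_one (by linarith [(hz j).2]) (by linarith) (by linarith)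
        linarith
  obtain ⟨N, hN⟩ := eventually_atTop.1 (hlim.eventually (gt_mem_nhds (by norm_num : (0 : ℝ) < 1 / 2)))
  set M := max N i
  have hmono : ∀ j, M ≤ j → z M ≤ z j := by
    intro j hj
    induction j, hj using Int.le_induction with
    | base => exact le_rfl
    | succ j hj ih =>
      rw [← hzT j, hT _ (hz j), if_pos (hN j ((le_max_left _ _).trans hj)).le]
      have : 0 ≤ (2 * z j) ^ (1 + α) := Real.rpow_nonneg (by linarith [(hz j).1]) _
      linarith
  have := ge_of_tendsto hlim (eventually_atTop.2 ⟨M, hmono⟩)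
  linarith [hall M (le_max_right _ _)]

/-- Let `α > 1` and let `T : [0,1] → [0,1]` be the symmetric map with
neutral fixed points `0` and `1`: `T x = x + (1/2)(2x)^{1+α}` for `x ≤ 1/2` and
`T x = 1 - T(1 - x)` for `x > 1/2`. Then there is no nonnegative summable `φ : ℤ → [0, ∞)`
for which `T` satisfies the (strong) gluing property `G(φ)`. -/
theorem neutral_map_no_summable_gluing (α : ℝ) (hα : 1 < α)
    (T : ℝ → ℝ)
    (hT : ∀ x ∈ Set.Icc (0 : ℝ) 1, T x =
      if x ≤ 1 / 2 then x + (1 / 2) * (2 * x) ^ (1 + α)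
      else 1 - ((1 - x) + (1 / 2) * (2 * (1 - x)) ^ (1 + α))) :
    ¬ ∃ φ : ℤ → ℝ, (∀ k, 0 ≤ φ k) ∧ Summable φ ∧
      ∀ x y : ℤ → ℝ,
        (∀ i, x i ∈ Set.Icc (0 : ℝ) 1) → (∀ i : ℤ, T (x i) = x (i + 1)) →
        (∀ i, y i ∈ Set.Icc (0 : ℝ) 1) → (∀ i : ℤ, T (y i) = y (i + 1)) →
        ∃ z : ℤ → ℝ, (∀ i, z i ∈ Set.Icc (0 : ℝ) 1) ∧ (∀ i : ℤ, T (z i) = z (i + 1)) ∧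
          (∀ k : ℤ, k < 0 → |x k - z k| ≤ φ k * |x 0 - y 0|) ∧
          (∀ k : ℤ, 0 ≤ k → |y k - z k| ≤ φ k * |x 0 - y 0|) := by
  rintro ⟨φ, hφ0, hφ, hglue⟩
  have hz0 : (0 : ℝ) ^ (1 + α) = 0 := Real.zero_rpow (by linarith)
  choose! g hg hgT using fun v (hv : v ∈ Set.Icc (0 : ℝ) 1) => exists_left_preimage hα hv
  let a : ℕ → ℝ := fun n => g^[n] 1
  have ha0 : a 0 = 1 := rfl
  have hsucc : ∀ n, a (n + 1) = g (a n) := fun n => Function.iterate_succ_apply' g n 1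
  have ha : ∀ n, a n ∈ Set.Icc (0 : ℝ) 1 := by
    intro n
    induction n with
    | zero => simp [ha0]
    | succ n ih =>
      rw [hsucc]
      exact ⟨(hg _ ih).1, (hg _ ih).2.trans (by norm_num)⟩
  have hhalf : ∀ n, a (n + 1) ∈ Set.Icc (0 : ℝ) (1 / 2) := fun n => by
    rw [hsucc]; exact hg _ (ha n)
  have hstep : ∀ n, a (n + 1) + (1 / 2) * (2 * a (n + 1)) ^ (1 + α) = a n := fun n => by
    rw [hsucc]; exact hgT _ (ha n)
  have hT0 : T 0 = 0 := by
    rw [hT 0 (by simp)]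
    simp [hz0]
  have hT1 : T 1 = 1 := by
    rw [hT 1 (by simp), if_neg (by norm_num)]
    simp [hz0]
  -- `Int.toNat` truncates at `0`, so this trajectory is constantly `1` at times `i ≥ 0`.
  obtain ⟨z, hz, hzT, hneg, hnonneg⟩ := hglue (fun i => a (-i).toNat) (fun _ => 0)
    (fun i => ha _) (by
      intro i
      rcases le_or_gt 0 i with hi | hi
      · have e1 : (-i).toNat = 0 := by omega
        have e2 : (-(i + 1)).toNat = 0 := by omega
        simp only [e1, e2, ha0, hT1]
      · have e1 : (-i).toNat = (-(i + 1)).toNat + 1 := by omega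
        simp only [e1]
        rw [hT _ (ha _), if_pos (hhalf _).2, hstep])
    (fun _ => by simp) (fun _ => hT0)
  have hd : |a (-(0 : ℤ)).toNat - 0| = 1 := by simp [ha0]
  simp only [hd, mul_one] at hneg hnonneg
  have hφlim : Tendsto φ atTop (𝓝 0) :=
    hφ.tendsto_cofinite_zero.mono_left (by rw [Int.cofinite_eq]; exact le_sup_right)
  have hzlim : Tendsto z atTop (𝓝 0) := by
    refine squeeze_zero' (Eventually.of_forall fun i => (hz i).1) ?_ hφlim
    filter_upwards [eventually_ge_atTop 0] with k hk
    have := hnonneg k hk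
    rwa [zero_sub, abs_neg, abs_of_nonneg (hz k).1] at this
  have hz_zero := eq_zero_of_tendsto_zero hα hT hz hzT hzlim
  have hbound : ∀ n : ℕ, (1 / 3) * (1 / ((n : ℝ) + 1)) ≤ φ (-((n : ℤ) + 1)) := by
    intro n
    have h1 := hneg (-((n : ℤ) + 1)) (by omega)
    have e : (- -((n : ℤ) + 1)).toNat = n + 1 := by omega
    rw [hz_zero, e, sub_zero, abs_of_nonneg (ha _).1] at h1
    have h2 := backward_orbit_lower_bound hα a ha0 hhalf hstep (n + 1)
    refine le_trans ?_ (h2.trans h1)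
    push_cast
    rw [div_mul_div_comm, one_mul]
    exact one_div_le_one_div_of_le (by positivity) (by linarith [(n.cast_nonneg : (0 : ℝ) ≤ n)])
  have hsum : Summable fun n : ℕ => φ (-((n : ℤ) + 1)) :=
    hφ.comp_injective (i := fun n : ℕ => -((n : ℤ) + 1)) fun m n h => by
      simp only at h; omega
  have h3 : Summable fun n : ℕ => (1 / 3 : ℝ) * (1 / ((n : ℝ) + 1)) :=
    hsum.of_nonneg_of_le (fun n => by positivity) hbound
  have h4 : Summable fun n : ℕ => 1 / ((n : ℝ) + 1) :=
    (summable_mul_left_iff (by norm_num)).1 h3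
  refine Real.not_summable_one_div_natCast ((summable_nat_add_iff 1).1 ?_)
  simpa using h4
end
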